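/- Let L n be the number of lambda terms of size n and K n the number of neutral head normal forms of size n. Then the density of neutral head normal forms among plain lambda terms is ρ: the sequence n ↦ K n / L n converges to ρ as n → ∞. -/

import Mathlib

/-- Lambda terms with de Bruijn indices. -/
inductive Term : Type
  | var : ℕ → Term
  | app : Term → Term → Term
  | abs : Term → Term

namespace Term

/-- Natural size: every operator (zero, successor, application, abstraction) has size 1. -/
def size : Term → ℕ
  | var k => k + 1
  | app M N => M.size + N.size + 1
  | abs M => M.size + 1

end Term

/-- `L n` is the number of lambda terms of size `n`. -/
noncomputable def L (n : ℕ) : ℕ := Nat.card {t : Term // t.size = n}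


/-- Neutral head normal forms: terms of the form `app (app … (app (var k) N₁) …) N_p`
with `p ≥ 0` and arbitrary terms `N₁, …, N_p`. -/
inductive IsNeutralHnf : Term → Prop
  | var (k : ℕ) : IsNeutralHnf (Term.var k)
  | app {m : Term} (n : Term) : IsNeutralHnf m → IsNeutralHnf (Term.app m n)

/-- `K n` is the number of neutral head normal forms of size `n`. -/
noncomputable def K (n : ℕ) : ℕ := Nat.card {t : Term // IsNeutralHnf t ∧ t.size = n}

/-!
Replacing the head `λ M` of a term by `0 M`, or its head variable `k` by `k + 1`, matches the terms
of size `n` with the neutral head normal forms of size `n + 1` other than `0`. Hence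
`K (n + 2) = L (n + 1)`, and the density is the limit of `L n / L (n + 1)`.

The generating function `T` of `L` solves a quadratic equation whose discriminant has the square
root `S = 1 - X - 2 X T`, so `S² = (1 - X / ρ) (1 + h)` with `h = ((ρ⁻¹ - 2) X + ρ X²) / (1 - X)`.
The coefficients of `h` are nonnegative, and `h(ρ) < 1` because `ρ³ < ρ`. Therefore `√(1 + h)`
converges beyond `ρ` and does not vanish at `ρ`, and Bender's theorem transfers the limit `ρ` of the
quotients of consecutive coefficients from `√(1 - X / ρ)` to `S`.
-/

open Finset Filter Topology PowerSeries

section ProductCounting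

variable {α β : Type*}

/-- Pairs of total weight `n`, sorted by the weights of the two components. -/
def addFiberEquivSigma (f : α → ℕ) (g : β → ℕ) (n : ℕ) :
    {x : α × β // f x.1 + g x.2 = n} ≃
      Σ p : antidiagonal n, {a // f a = p.1.1} × {b // g b = p.1.2} where
  toFun x := ⟨⟨(f x.1.1, g x.1.2), mem_antidiagonal.2 x.2⟩, ⟨x.1.1, rfl⟩, ⟨x.1.2, rfl⟩⟩
  invFun y := ⟨(y.2.1.1, y.2.2.1), by rw [y.2.1.2, y.2.2.2, mem_antidiagonal.1 y.1.2]⟩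
  left_inv _ := rfl
  right_inv := by
    rintro ⟨⟨⟨i, j⟩, hp⟩, ⟨a, ha⟩, ⟨b, hb⟩⟩
    dsimp only at ha hb
    subst ha hb
    rfl

lemma card_add_fiber_eq_sum_antidiagonal (f : α → ℕ) (g : β → ℕ) [∀ i, Finite {a // f a = i}]
    [∀ j, Finite {b // g b = j}] (n : ℕ) :
    Nat.card {x : α × β // f x.1 + g x.2 = n} =
      ∑ p ∈ antidiagonal n, Nat.card {a // f a = p.1} * Nat.card {b // g b = p.2} := by
  rw [Nat.card_congr (addFiberEquivSigma f g n), Nat.card_sigma]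
  simp only [Nat.card_prod]
  exact sum_coe_sort (antidiagonal n)
    fun p ↦ Nat.card {a // f a = p.1} * Nat.card {b // g b = p.2}

end ProductCounting

namespace Term

lemma size_pos (t : Term) : 0 < t.size := by
  cases t <;> exact Nat.succ_pos _

lemma finite_setOf_size_le (n : ℕ) : {t : Term | t.size ≤ n}.Finite := by
  induction n with
  | zero => exact Set.finite_empty.subset fun t ht ↦ absurd t.size_pos (Nat.not_lt.2 ht)
  | succ n ih =>
    refine ((((Set.finite_Iic n).image var).union (ih.image2 app ih)).union
      (ih.image abs)).subset ?_
    rintro (k | ⟨M, N⟩ | M) ht <;> simp only [Set.mem_ofPred_eq, size] at ht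
    · exact .inl (.inl ⟨k, by simpa using ht, rfl⟩)
    · exact .inl (.inr ⟨M, show M.size ≤ n by lia, N, show N.size ≤ n by lia, rfl⟩)
    · exact .inr ⟨M, show M.size ≤ n by lia, rfl⟩

instance finite_size_eq (n : ℕ) : Finite {t : Term // t.size = n} :=
  ((finite_setOf_size_le n).subset fun _ ht ↦ le_of_eq ht).to_subtype

/-- Decomposition of the terms of size `n + 1` by their root constructor. The `Unit` summand is the
only variable of that size, `var n`. -/
def sizeSuccEquiv (n : ℕ) :
    {t : Term // t.size = n + 1} ≃
      (Unit ⊕ {t : Term // t.size = n}) ⊕ {x : Term × Term // x.1.size + x.2.size = n} where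
  toFun
    | ⟨var _, _⟩ => .inl (.inl ())
    | ⟨abs M, h⟩ => .inl (.inr ⟨M, Nat.succ_injective h⟩)
    | ⟨app M N, h⟩ => .inr ⟨(M, N), Nat.succ_injective h⟩
  invFun
    | .inl (.inl _) => ⟨var n, rfl⟩
    | .inl (.inr M) => ⟨abs M.1, congrArg Nat.succ M.2⟩
    | .inr x => ⟨app x.1.1 x.1.2, congrArg Nat.succ x.2⟩
  left_inv := by
    rintro ⟨k | ⟨M, N⟩ | M, h⟩
    · obtain rfl : k = n := Nat.succ_injective h
      rfl
    · rfl
    · rfl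
  right_inv := by rintro ((_ | _) | _) <;> rfl

/-- The map sending `(λ M) N₁ … N_p` to `0 M N₁ … N_p` and `k N₁ … N_p` to `(k + 1) N₁ … N_p`.
It matches the terms of size `n` with the neutral head normal forms of size `n + 1` other than
`var 0`. -/
def neutralize : Term → Term
  | var k => var (k + 1)
  | app M N => app M.neutralize N
  | abs M => app (var 0) M

lemma size_neutralize (t : Term) : t.neutralize.size = t.size + 1 := by
  induction t with
  | var k => rfl
  | app M N ihM _ => simp only [neutralize, size, ihM]; lia
  | abs M _ => simp only [neutralize, size]; lia

lemma isNeutralHnf_neutralize (t : Term) : IsNeutralHnf t.neutralize := by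
  induction t with
  | var k => exact .var _
  | app M N ihM _ => exact .app N ihM
  | abs M _ => exact .app M (.var 0)

lemma neutralize_ne_var_zero (t : Term) : t.neutralize ≠ var 0 := by
  cases t <;> simp [neutralize]

lemma neutralize_injective : Function.Injective neutralize := by
  intro s
  induction s with
  | var k => rintro (_ | _ | _) h <;> simp_all [neutralize]
  | app M N ihM _ =>
    rintro (_ | ⟨M', N'⟩ | _) h <;> simp only [neutralize, app.injEq, reduceCtorEq] at h
    · rw [ihM h.1, h.2]
    · exact absurd h.1 M.neutralize_ne_var_zero
  | abs M _ =>
    rintro (_ | ⟨M', N'⟩ | _) h <;> simp only [neutralize, app.injEq, reduceCtorEq] at h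
    · exact absurd h.1.symm M'.neutralize_ne_var_zero
    · rw [h.2]

lemma exists_neutralize_eq {t : Term} (ht : IsNeutralHnf t) (h0 : t ≠ var 0) :
    ∃ s : Term, s.neutralize = t := by
  induction ht with
  | var k =>
    obtain ⟨j, rfl⟩ := Nat.exists_eq_succ_of_ne_zero fun hk : k = 0 ↦ h0 (congrArg var hk)
    exact ⟨var j, rfl⟩
  | @app M N _ ih =>
    by_cases hM : M = var 0
    · exact ⟨abs N, by rw [hM, neutralize]⟩
    · obtain ⟨s, rfl⟩ := ih hM
      exact ⟨app s N, rfl⟩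

end Term

lemma L_zero : L 0 = 0 := by
  have : IsEmpty {t : Term // t.size = 0} := ⟨fun t ↦ t.1.size_pos.ne' t.2⟩
  exact Nat.card_of_isEmpty

lemma L_succ (n : ℕ) : L (n + 1) = 1 + L n + ∑ p ∈ antidiagonal n, L p.1 * L p.2 := by
  have : Finite {x : Term × Term // x.1.size + x.2.size = n} :=
    .of_equiv _ (addFiberEquivSigma Term.size Term.size n).symm
  simp only [L, Nat.card_congr (Term.sizeSuccEquiv n), Nat.card_sum, Nat.card_unique,
    card_add_fiber_eq_sum_antidiagonal Term.size Term.size n]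

lemma K_add_two (n : ℕ) : K (n + 2) = L (n + 1) := by
  let φ : {t : Term // t.size = n + 1} → {t : Term // IsNeutralHnf t ∧ t.size = n + 2} :=
    fun t ↦ ⟨t.1.neutralize, t.1.isNeutralHnf_neutralize, by rw [t.1.size_neutralize, t.2]⟩
  refine (Nat.card_eq_of_bijective φ ⟨fun s t hst ↦ ?_, fun ⟨t, ht, hsize⟩ ↦ ?_⟩).symm
  · exact Subtype.ext (Term.neutralize_injective (congrArg Subtype.val hst))
  · have h0 : t ≠ .var 0 := by rintro rfl; simp [Term.size] at hsize
    obtain ⟨s, rfl⟩ := Term.exists_neutralize_eq ht h0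
    exact ⟨⟨s, by simpa [Term.size_neutralize] using hsize⟩, rfl⟩

section RatioAsymptotics

variable {𝕜 : Type*} [NormedField 𝕜]

lemma exists_eventually_forall_le_mul_of_eventually_le_succ {w : ℕ → ℝ}
    (hpos : ∀ᶠ n in atTop, 0 < w n) (hmono : ∀ᶠ n in atTop, w n ≤ w (n + 1)) :
    ∃ C, ∀ᶠ n in atTop, ∀ m ≤ n, w m ≤ C * w n := by
  obtain ⟨N, hN⟩ := eventually_atTop.1 (hpos.and hmono)
  have hwN : 0 < w N := (hN N le_rfl).1
  have hmonoOn : ∀ m n, N ≤ m → m ≤ n → w m ≤ w n := fun m n hm hmn ↦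
    Nat.le_induction le_rfl (fun k hk ih ↦ ih.trans (hN k (hm.trans hk)).2) n hmn
  obtain ⟨B, hB⟩ := ((range (N + 1)).image w).exists_le
  refine ⟨max 1 (B / w N), eventually_atTop.2 ⟨N, fun n hn m hmn ↦ ?_⟩⟩
  rcases le_total N m with hm | hm
  · calc w m ≤ 1 * w n := by rw [one_mul]; exact hmonoOn m n hm hmn
      _ ≤ max 1 (B / w N) * w n := by gcongr; exacts [(hN n hn).1.le, le_max_left _ _]
  · calc w m ≤ B := hB _ (mem_image_of_mem w (mem_range_succ_iff.2 hm))
      _ = B / w N * w N := (div_mul_cancel₀ B hwN.ne').symm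
      _ ≤ max 1 (B / w N) * w N := by gcongr; exact le_max_right _ _
      _ ≤ max 1 (B / w N) * w n := by gcongr; exact hmonoOn N n le_rfl hn

variable {a : ℕ → 𝕜} {ρ : 𝕜}

lemma tendsto_div_add_of_tendsto_div_succ (ha0 : ∀ᶠ n in atTop, a n ≠ 0)
    (ha : Tendsto (fun n ↦ a n / a (n + 1)) atTop (𝓝 ρ)) (k : ℕ) :
    Tendsto (fun n ↦ a n / a (n + k)) atTop (𝓝 (ρ ^ k)) := by
  induction k with
  | zero =>
    rw [pow_zero]
    exact tendsto_const_nhds.congr' (ha0.mono fun n hn ↦ (div_self hn).symm)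
  | succ k ih =>
    rw [pow_succ]
    refine (ih.mul (ha.comp (tendsto_add_atTop_nat k))).congr' ?_
    filter_upwards [(tendsto_add_atTop_nat k).eventually ha0] with n hn
    exact div_mul_div_cancel₀ hn

lemma exists_eventually_norm_mul_pow_le {r : ℝ} (hρr : ‖ρ‖ < r)
    (ha0 : ∀ᶠ n in atTop, a n ≠ 0) (ha : Tendsto (fun n ↦ a n / a (n + 1)) atTop (𝓝 ρ)) :
    ∃ C, ∀ᶠ n in atTop, ∀ m ≤ n, ‖a m‖ * r ^ m ≤ C * (‖a n‖ * r ^ n) := by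
  have hr : 0 < r := (norm_nonneg ρ).trans_lt hρr
  refine exists_eventually_forall_le_mul_of_eventually_le_succ ?_ ?_
  · filter_upwards [ha0] with n hn
    have := norm_pos_iff.2 hn
    positivity
  · filter_upwards [ha.norm.eventually_lt_const hρr, (tendsto_add_atTop_nat 1).eventually ha0]
      with n hlt hn
    rw [norm_div, div_lt_iff₀ (norm_pos_iff.2 hn)] at hlt
    calc ‖a n‖ * r ^ n ≤ r * ‖a (n + 1)‖ * r ^ n := by gcongr
      _ = ‖a (n + 1)‖ * r ^ (n + 1) := by ring

end RatioAsymptotics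

section Bender

variable {𝕜 : Type*} [NormedField 𝕜] [CompleteSpace 𝕜] {f g : 𝕜⟦X⟧} {ρ : 𝕜} {r : ℝ}

/-- **Bender's theorem**, by dominated convergence: since `‖coeff m f‖ * r ^ m` is eventually
increasing in `m`, the quotient `coeff (n - k) f / coeff n f` is `O(r ^ k)` uniformly in `n`. -/
theorem tendsto_coeff_mul_div_coeff (hρr : ‖ρ‖ < r) (hg : Summable fun n ↦ ‖coeff n g‖ * r ^ n)
    (hf0 : ∀ᶠ n in atTop, coeff n f ≠ 0)
    (hf : Tendsto (fun n ↦ coeff n f / coeff (n + 1) f) atTop (𝓝 ρ)) :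
    Tendsto (fun n ↦ coeff n (g * f) / coeff n f) atTop (𝓝 (∑' k, coeff k g * ρ ^ k)) := by
  have hr : 0 < r := (norm_nonneg ρ).trans_lt hρr
  obtain ⟨B, hB⟩ := exists_eventually_norm_mul_pow_le (a := fun n ↦ coeff n f) hρr hf0 hf
  let F (n k : ℕ) : 𝕜 := if k ≤ n then coeff k g * (coeff (n - k) f / coeff n f) else 0
  have hterm (k : ℕ) : Tendsto (F · k) atTop (𝓝 (coeff k g * ρ ^ k)) := by
    rw [← tendsto_add_atTop_iff_nat k]
    refine ((tendsto_div_add_of_tendsto_div_succ hf0 hf k).const_mul (coeff k g)).congr fun n ↦ ?_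
    simp [F]
  have hbound : ∀ᶠ n in atTop, ∀ k, ‖F n k‖ ≤ B * (‖coeff k g‖ * r ^ k) := by
    filter_upwards [hB, hf0] with n hn hfn
    have hfn' : 0 < ‖coeff n f‖ := norm_pos_iff.2 hfn
    have hB0 : 0 ≤ B := by
      have := hn n le_rfl
      exact zero_le_one.trans ((le_mul_iff_one_le_left (by positivity)).1 this)
    intro k
    by_cases hk : k ≤ n
    · have hmk : ‖coeff (n - k) f‖ / ‖coeff n f‖ ≤ B * r ^ k := by
        rw [div_le_iff₀ hfn']
        refine le_of_mul_le_mul_right ?_ (pow_pos hr (n - k))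
        calc ‖coeff (n - k) f‖ * r ^ (n - k) ≤ B * (‖coeff n f‖ * r ^ n) := hn _ (n.sub_le k)
          _ = B * r ^ k * ‖coeff n f‖ * r ^ (n - k) := by rw [← pow_mul_pow_sub r hk]; ring
      calc ‖F n k‖ = ‖coeff k g‖ * (‖coeff (n - k) f‖ / ‖coeff n f‖) := by
            simp only [F, if_pos hk, norm_mul, norm_div]
        _ ≤ ‖coeff k g‖ * (B * r ^ k) := by gcongr
        _ = B * (‖coeff k g‖ * r ^ k) := by ring
    · simp only [F, if_neg hk, norm_zero]
      positivity
  refine (tendsto_tsum_of_dominated_convergence (hg.mul_left B) hterm hbound).congr fun n ↦ ?_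
  rw [tsum_eq_sum (s := range (n + 1)) fun k hk ↦ if_neg (by simpa using hk), coeff_mul,
    Nat.sum_antidiagonal_eq_sum_range_succ fun i j ↦ coeff i g * coeff j f, sum_div]
  exact sum_congr rfl fun k hk ↦ by rw [if_pos (mem_range_succ_iff.1 hk), mul_div_assoc]

lemma tendsto_coeff_one_add_mul_div_coeff_succ (hρr : ‖ρ‖ < r)
    (hg : Summable fun n ↦ ‖coeff n g‖ * r ^ n) (hgρ : 1 + ∑' k, coeff k g * ρ ^ k ≠ 0)
    (hf0 : ∀ᶠ n in atTop, coeff n f ≠ 0)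
    (hf : Tendsto (fun n ↦ coeff n f / coeff (n + 1) f) atTop (𝓝 ρ)) :
    Tendsto (fun n ↦ coeff n ((1 + g) * f) / coeff (n + 1) ((1 + g) * f)) atTop (𝓝 ρ) := by
  have hquot : Tendsto (fun n ↦ coeff n ((1 + g) * f) / coeff n f) atTop
      (𝓝 (1 + ∑' k, coeff k g * ρ ^ k)) := by
    refine ((tendsto_coeff_mul_div_coeff hρr hg hf0 hf).const_add 1).congr' ?_
    filter_upwards [hf0] with n hn
    rw [one_add_mul, map_add, add_div, div_self hn]
  have hlim := (hquot.div (hquot.comp (tendsto_add_atTop_nat 1)) hgρ).mul hf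
  rw [div_self hgρ, one_mul] at hlim
  refine hlim.congr' ?_
  filter_upwards [hf0, (tendsto_add_atTop_nat 1).eventually hf0] with n hn hn1
  simp only [Pi.div_apply, Function.comp_apply]
  field_simp

end Bender

section BinomialSeries

variable {𝕜 : Type*} [RCLike 𝕜]

/-- The formal power series `(1 - X / ρ) ^ α`, a rescaled binomial series. It is `1` at the junk
value `ρ = 0`. -/
noncomputable def oneSubDivPow (ρ α : 𝕜) : 𝕜⟦X⟧ := rescale (-ρ⁻¹) (PowerSeries.binomialSeries 𝕜 α)

lemma constantCoeff_oneSubDivPow (ρ α : 𝕜) : constantCoeff (oneSubDivPow ρ α) = 1 := by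
  rw [← coeff_zero_eq_constantCoeff_apply, oneSubDivPow, coeff_rescale]
  simp

lemma sq_oneSubDivPow_half (ρ : 𝕜) : oneSubDivPow ρ (1 / 2) ^ 2 = 1 - C ρ⁻¹ * X := by
  have hsq : PowerSeries.binomialSeries 𝕜 (1 / 2 : 𝕜) ^ 2 = 1 + X := by
    rw [sq, ← binomialSeries_add, add_halves]
    simpa using binomialSeries_nat (R := 𝕜) (A := 𝕜) 1
  rw [oneSubDivPow, ← map_pow, hsq, map_add, map_one, rescale_X, map_neg]
  ring

lemma succ_mul_choose_succ (α : 𝕜) (n : ℕ) :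
    ((n : 𝕜) + 1) * Ring.choose α (n + 1) = Ring.choose α n * (α - n) := by
  simpa using Ring.choose_smul_choose α n.le_succ

lemma succ_mul_coeff_succ_oneSubDivPow (ρ α : 𝕜) (n : ℕ) :
    ((n : 𝕜) + 1) * coeff (n + 1) (oneSubDivPow ρ α) =
      ρ⁻¹ * (n - α) * coeff n (oneSubDivPow ρ α) := by
  simp only [oneSubDivPow, coeff_rescale, binomialSeries_coeff, smul_eq_mul, mul_one]
  linear_combination (-ρ⁻¹) ^ (n + 1) * succ_mul_choose_succ α n

variable {ρ α : 𝕜}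

lemma coeff_oneSubDivPow_ne_zero (hρ : ρ ≠ 0) (hα : ∀ n : ℕ, α ≠ n) (n : ℕ) :
    coeff n (oneSubDivPow ρ α) ≠ 0 := by
  induction n with
  | zero => rw [coeff_zero_eq_constantCoeff_apply, constantCoeff_oneSubDivPow]; exact one_ne_zero
  | succ n ih =>
    refine right_ne_zero_of_mul (a := (n : 𝕜) + 1) ?_
    rw [succ_mul_coeff_succ_oneSubDivPow]
    exact mul_ne_zero (mul_ne_zero (inv_ne_zero hρ) (sub_ne_zero.2 (hα n).symm)) ih

lemma tendsto_coeff_oneSubDivPow_div_succ (hρ : ρ ≠ 0) (hα : ∀ n : ℕ, α ≠ n) :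
    Tendsto (fun n ↦ coeff n (oneSubDivPow ρ α) / coeff (n + 1) (oneSubDivPow ρ α))
      atTop (𝓝 ρ) := by
  have hlim : Tendsto (fun n : ℕ ↦ ρ * ((1 + (n : 𝕜)) / (-α + n))) atTop (𝓝 (ρ * 1)) := by
    simpa using (tendsto_add_mul_div_add_mul_atTop_nhds (1 : 𝕜) (-α) 1 one_ne_zero).const_mul ρ
  rw [mul_one] at hlim
  refine hlim.congr fun n ↦ ?_
  have hn : (-α + n : 𝕜) ≠ 0 := by rw [neg_add_eq_sub]; exact sub_ne_zero.2 (hα n).symm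
  rw [← mul_div_assoc, div_eq_div_iff hn (coeff_oneSubDivPow_ne_zero hρ hα _), mul_assoc, add_comm,
    succ_mul_coeff_succ_oneSubDivPow]
  field_simp
  ring

end BinomialSeries

section SquareRootSingularity

lemma sum_range_succ_sum_antidiagonal_mul_le_sq {x : ℕ → ℝ} (hx : ∀ n, 0 ≤ x n) (hx0 : x 0 = 0)
    (N : ℕ) :
    ∑ n ∈ range (N + 1), ∑ p ∈ antidiagonal n, x p.1 * x p.2 ≤ (∑ n ∈ range N, x n) ^ 2 := by
  have hdisj : Set.PairwiseDisjoint (range (N + 1) : Set ℕ) (antidiagonal (A := ℕ)) :=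
    fun i _ j _ hij ↦ disjoint_left.2 fun p hi hj ↦
      hij ((mem_antidiagonal.1 hi).symm.trans (mem_antidiagonal.1 hj))
  rw [← sum_biUnion hdisj, sq, sum_mul_sum, ← sum_product', ← sum_filter_ne_zero]
  refine sum_le_sum_of_subset_of_nonneg (fun p hp ↦ ?_) fun p _ _ ↦ mul_nonneg (hx _) (hx _)
  simp only [mem_filter, mem_biUnion, mem_range, HasAntidiagonal.mem_antidiagonal] at hp
  have h1 : p.1 ≠ 0 := fun h ↦ hp.2 (by rw [h, hx0, zero_mul])
  have h2 : p.2 ≠ 0 := fun h ↦ hp.2 (by rw [h, hx0, mul_zero])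
  rw [mem_product, mem_range, mem_range]
  lia

variable {𝕜 : Type*} [RCLike 𝕜] {f h v : 𝕜⟦X⟧} {ρ : 𝕜} {r s : ℝ}

lemma norm_coeff_sq_mul_pow_le (v : 𝕜⟦X⟧) (hr : 0 ≤ r) (n : ℕ) :
    ‖coeff n (v ^ 2)‖ * r ^ n ≤
      ∑ p ∈ antidiagonal n, (‖coeff p.1 v‖ * r ^ p.1) * (‖coeff p.2 v‖ * r ^ p.2) := by
  calc ‖coeff n (v ^ 2)‖ * r ^ n
      ≤ (∑ p ∈ antidiagonal n, ‖coeff p.1 v * coeff p.2 v‖) * r ^ n := by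
        rw [sq, coeff_mul]
        gcongr
        exact norm_sum_le _ _
    _ = ∑ p ∈ antidiagonal n, (‖coeff p.1 v‖ * r ^ p.1) * (‖coeff p.2 v‖ * r ^ p.2) := by
        rw [sum_mul]
        refine sum_congr rfl fun p hp ↦ ?_
        rw [← mem_antidiagonal.1 hp, norm_mul, pow_add]
        ring

/-- The coefficients of `v = √(1 + h) - 1` are dominated by those of `1 - √(1 - |h|)`, whose value
at `r` is at most `1`. The induction runs on `2 v = h - v²`. -/
lemma sum_norm_coeff_mul_pow_le_one (hr : 0 ≤ r) (hv0 : constantCoeff v = 0)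
    (hv : (1 + v) ^ 2 = 1 + h) (hh : ∀ N, ∑ n ∈ range N, ‖coeff n h‖ * r ^ n ≤ 1) (N : ℕ) :
    ∑ n ∈ range N, ‖coeff n v‖ * r ^ n ≤ 1 := by
  have hcoeff (n : ℕ) : 2 * ‖coeff n v‖ ≤ ‖coeff n h‖ + ‖coeff n (v ^ 2)‖ := by
    have h2v : v + v = h - v ^ 2 := by linear_combination hv
    calc 2 * ‖coeff n v‖
        = ‖coeff n (v + v)‖ := by rw [map_add, ← two_mul, norm_mul, RCLike.norm_two]
      _ ≤ ‖coeff n h‖ + ‖coeff n (v ^ 2)‖ := by rw [h2v, map_sub]; exact norm_sub_le _ _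
  induction N with
  | zero => simp
  | succ N ih =>
    have hsq : ∑ n ∈ range (N + 1), ‖coeff n (v ^ 2)‖ * r ^ n ≤ 1 :=
      calc ∑ n ∈ range (N + 1), ‖coeff n (v ^ 2)‖ * r ^ n
          ≤ (∑ n ∈ range N, ‖coeff n v‖ * r ^ n) ^ 2 :=
            (sum_le_sum fun n _ ↦ norm_coeff_sq_mul_pow_le v hr n).trans
              (sum_range_succ_sum_antidiagonal_mul_le_sq (x := fun n ↦ ‖coeff n v‖ * r ^ n)
                (fun n ↦ by positivity) (by simp [hv0]) N)
        _ ≤ 1 := pow_le_one₀ (sum_nonneg fun n _ ↦ by positivity) ih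
    have hsum : 2 * ∑ n ∈ range (N + 1), ‖coeff n v‖ * r ^ n ≤
        ∑ n ∈ range (N + 1), ‖coeff n h‖ * r ^ n +
          ∑ n ∈ range (N + 1), ‖coeff n (v ^ 2)‖ * r ^ n := by
      rw [mul_sum, ← sum_add_distrib]
      refine sum_le_sum fun n _ ↦ ?_
      rw [← mul_assoc, ← add_mul]
      exact mul_le_mul_of_nonneg_right (hcoeff n) (pow_nonneg hr n)
    linarith [hh (N + 1)]

lemma norm_tsum_coeff_mul_pow_lt_one (hρr : ‖ρ‖ < r) (hv0 : constantCoeff v = 0)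
    (hv : ∀ N, ∑ n ∈ range N, ‖coeff n v‖ * r ^ n ≤ 1) :
    ‖∑' n, coeff n v * ρ ^ n‖ < 1 := by
  have hr : 0 < r := (norm_nonneg ρ).trans_lt hρr
  have hq : ‖ρ‖ / r < 1 := (div_lt_one hr).2 hρr
  have hsum : Summable fun n ↦ ‖coeff n v‖ * r ^ n :=
    summable_of_sum_range_le (fun n ↦ by positivity) hv
  have hterm (n : ℕ) : ‖coeff n v * ρ ^ n‖ ≤ ‖ρ‖ / r * (‖coeff n v‖ * r ^ n) := by
    rcases eq_or_ne n 0 with rfl | hn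
    · simp [hv0]
    · calc ‖coeff n v * ρ ^ n‖ = (‖ρ‖ / r) ^ n * (‖coeff n v‖ * r ^ n) := by
            rw [norm_mul, norm_pow, div_pow]; field_simp
        _ ≤ ‖ρ‖ / r * (‖coeff n v‖ * r ^ n) := by
            gcongr
            exact pow_le_of_le_one (by positivity) hq.le hn
  calc ‖∑' n, coeff n v * ρ ^ n‖ ≤ ∑' n, ‖ρ‖ / r * (‖coeff n v‖ * r ^ n) :=
        tsum_of_norm_bounded (hsum.mul_left _).hasSum hterm
    _ = ‖ρ‖ / r * ∑' n, ‖coeff n v‖ * r ^ n := tsum_mul_left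
    _ ≤ ‖ρ‖ / r * 1 := by
        gcongr
        exact Real.tsum_le_of_sum_range_le (fun n ↦ by positivity) hv
    _ < 1 := by rwa [mul_one]

lemma exists_eq_one_add_mul_oneSubDivPow_half (hf0 : constantCoeff f = 1)
    (hf : f ^ 2 = (1 - C ρ⁻¹ * X) * (1 + h)) :
    ∃ v : 𝕜⟦X⟧, constantCoeff v = 0 ∧ f = (1 + v) * oneSubDivPow ρ (1 / 2) ∧
      (1 + v) ^ 2 = 1 + h := by
  set A := oneSubDivPow ρ (1 / 2) with hA
  have hA0 : constantCoeff A = 1 := constantCoeff_oneSubDivPow ρ _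
  have hAinv : A * A⁻¹ = 1 := PowerSeries.mul_inv_cancel A (by rw [hA0]; exact one_ne_zero)
  refine ⟨f * A⁻¹ - 1, by simp [hf0, hA0], by linear_combination -f * hAinv, ?_⟩
  rw [← sq_oneSubDivPow_half, ← hA] at hf
  linear_combination A⁻¹ ^ 2 * hf + (1 + h) * (A * A⁻¹ + 1) * hAinv

/-- The function `√(1 - X / ρ) √(1 + h)` has its dominant singularity at `ρ`, because `√(1 + h)`
converges beyond `ρ` and does not vanish there. -/
theorem tendsto_coeff_div_coeff_succ_of_sq_eq (hρ : ρ ≠ 0) (hρr : ‖ρ‖ < r)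
    (hf0 : constantCoeff f = 1) (hf : f ^ 2 = (1 - C ρ⁻¹ * X) * (1 + h))
    (hh : HasSum (fun n ↦ ‖coeff n h‖ * r ^ n) s) (hs : s ≤ 1) :
    Tendsto (fun n ↦ coeff n f / coeff (n + 1) f) atTop (𝓝 ρ) := by
  have hr : 0 < r := (norm_nonneg ρ).trans_lt hρr
  obtain ⟨v, hv0, hfv, hv⟩ := exists_eq_one_add_mul_oneSubDivPow_half hf0 hf
  have hsum := sum_norm_coeff_mul_pow_le_one hr.le hv0 hv fun N ↦
    (sum_le_hasSum (range N) (fun n _ ↦ by positivity) hh).trans hs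
  have hv_summable : Summable fun n ↦ ‖coeff n v‖ * r ^ n :=
    summable_of_sum_range_le (fun n ↦ by positivity) hsum
  have hvρ_ne : 1 + ∑' n, coeff n v * ρ ^ n ≠ 0 := fun h0 ↦ by
    have := norm_tsum_coeff_mul_pow_lt_one hρr hv0 hsum
    rw [← neg_eq_of_add_eq_zero_right h0, norm_neg, norm_one] at this
    exact this.false
  have hhalf (n : ℕ) : (1 / 2 : 𝕜) ≠ n := fun hn ↦ by
    have : (1 : ℕ) = 2 * n := by
      rw [← Nat.cast_inj (R := 𝕜)]
      push_cast
      rw [← hn]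
      norm_num
    lia
  rw [hfv]
  exact tendsto_coeff_one_add_mul_div_coeff_succ hρr hv_summable hvρ_ne
    (.of_forall (coeff_oneSubDivPow_ne_zero hρ hhalf))
    (tendsto_coeff_oneSubDivPow_div_succ hρ hhalf)

end SquareRootSingularity

lemma hasSum_coeff_X_mul_mul_pow {R : Type*} [Ring R] [TopologicalSpace R]
    [IsTopologicalRing R] {p : R⟦X⟧} {x s : R} (hp : HasSum (fun n ↦ coeff n p * x ^ n) s) :
    HasSum (fun n ↦ coeff n (X * p) * x ^ n) (s * x) := by
  rw [← hasSum_nat_add_iff' 1]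
  simpa [coeff_succ_X_mul, pow_succ, mul_assoc] using hp.mul_right x

section TermSeries

/-- The generating function of lambda terms by size. -/
noncomputable def termSeries : ℝ⟦X⟧ := PowerSeries.mk fun n ↦ (L n : ℝ)

lemma termSeries_eq : termSeries = X * (PowerSeries.mk 1 + termSeries + termSeries ^ 2) := by
  ext n
  cases n with
  | zero => simp [termSeries, L_zero]
  | succ n => rw [coeff_succ_X_mul]; simp [termSeries, L_succ, sq, coeff_mul]

/-- The square root of the discriminant of the quadratic equation `termSeries_eq`. -/
noncomputable def termDiscrSqrt : ℝ⟦X⟧ := 1 - X - 2 * X * termSeries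

lemma constantCoeff_termDiscrSqrt : constantCoeff termDiscrSqrt = 1 := by
  simp [termDiscrSqrt]

lemma coeff_termDiscrSqrt_add_two (n : ℕ) : coeff (n + 2) termDiscrSqrt = -2 * L (n + 1) := by
  have hX : termDiscrSqrt = 1 - X - X * (C 2 * termSeries) := by
    rw [termDiscrSqrt, map_ofNat]
    ring
  rw [hX, map_sub, map_sub, coeff_succ_X_mul, coeff_C_mul]
  simp [coeff_one, coeff_X, termSeries]

variable {ρ r : ℝ}

/-- The series `h = ((ρ⁻¹ - 2) X + ρ X²) / (1 - X)`, for which the discriminant of `termSeries_eq`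
is `(1 - X / ρ) (1 + h)` when `ρ` is a root of `z³ + z² + 3z - 1`. -/
noncomputable def discrCofactor (ρ : ℝ) : ℝ⟦X⟧ :=
  C (ρ⁻¹ - 2) * (X * PowerSeries.mk 1) + C ρ * (X * (X * PowerSeries.mk 1))

lemma sq_termDiscrSqrt (hρ : ρ ≠ 0) (hroot : ρ ^ 3 + ρ ^ 2 + 3 * ρ - 1 = 0) :
    termDiscrSqrt ^ 2 = (1 - C ρ⁻¹ * X) * (1 + discrCofactor ρ) := by
  have hgeom : (PowerSeries.mk 1 : ℝ⟦X⟧) * (1 - X) = 1 := mk_one_mul_one_sub_eq_one ℝ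
  have hinv : (C ρ : ℝ⟦X⟧) * C ρ⁻¹ = 1 := by rw [← map_mul, mul_inv_cancel₀ hρ, map_one]
  have hrootC : (C ρ : ℝ⟦X⟧) = C ρ⁻¹ ^ 2 - 3 * C ρ⁻¹ - 1 := by
    have : ρ = ρ⁻¹ ^ 2 - 3 * ρ⁻¹ - 1 := by
      field_simp
      linarith
    simpa only [map_sub, map_mul, map_pow, map_one, map_ofNat] using congrArg (C (R := ℝ)) this
  have hdiscr : termDiscrSqrt ^ 2 = (1 - X) ^ 2 - 4 * X ^ 2 * PowerSeries.mk 1 := by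
    rw [termDiscrSqrt]
    linear_combination -4 * X * termSeries_eq
  have hcofactor : ((1 - X) ^ 2 - 4 * X ^ 2 * PowerSeries.mk 1) * (1 - X) =
      (1 - C ρ⁻¹ * X) * (1 + discrCofactor ρ) * (1 - X) := by
    rw [discrCofactor, map_sub, map_ofNat]
    linear_combination X ^ 3 * hinv - X ^ 2 * hrootC -
      (4 * X ^ 2 + (1 - C ρ⁻¹ * X) * ((C ρ⁻¹ - 2) * X + C ρ * X ^ 2)) * hgeom
  rw [hdiscr]
  exact mul_right_cancel₀ (right_ne_zero_of_mul_eq_one hgeom) hcofactor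

lemma hasSum_coeff_discrCofactor_mul_pow (ρ : ℝ) (hr : |r| < 1) :
    HasSum (fun n ↦ coeff n (discrCofactor ρ) * r ^ n)
      ((ρ⁻¹ - 2) * ((1 - r)⁻¹ * r) + ρ * ((1 - r)⁻¹ * r * r)) := by
  have hgeom : HasSum (fun n ↦ coeff n (PowerSeries.mk 1 : ℝ⟦X⟧) * r ^ n) (1 - r)⁻¹ := by
    simpa using hasSum_geometric_of_abs_lt_one hr
  have hX := hasSum_coeff_X_mul_mul_pow hgeom
  simpa only [discrCofactor, map_add, coeff_C_mul, add_mul, mul_assoc] using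
    (hX.mul_left (ρ⁻¹ - 2)).add ((hasSum_coeff_X_mul_mul_pow hX).mul_left ρ)

lemma coeff_discrCofactor_nonneg (hρ : 0 ≤ ρ) (hρ2 : 2 ≤ ρ⁻¹) (n : ℕ) :
    0 ≤ coeff n (discrCofactor ρ) := by
  have hX (p : ℝ⟦X⟧) (hp : ∀ n, 0 ≤ coeff n p) : ∀ n, 0 ≤ coeff n (X * p)
    | 0 => by simp
    | n + 1 => by rw [coeff_succ_X_mul]; exact hp n
  have h1 := hX (PowerSeries.mk 1) fun n ↦ by simp
  rw [discrCofactor, map_add, coeff_C_mul, coeff_C_mul]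
  exact add_nonneg (mul_nonneg (sub_nonneg.2 hρ2) (h1 n)) (mul_nonneg hρ (hX _ h1 n))

lemma exists_hasSum_norm_coeff_discrCofactor_le_one (hρ0 : 0 < ρ) (hρ2 : 2 ≤ ρ⁻¹) :
    ∃ r > ρ, ∃ s ≤ 1, HasSum (fun n ↦ ‖coeff n (discrCofactor ρ)‖ * r ^ n) s := by
  have hρ1 : ρ < 1 := (one_lt_inv₀ hρ0).1 (one_lt_two.trans_le hρ2)
  have hval : (ρ⁻¹ - 1) * ρ + ρ * ρ ^ 2 < 1 := by
    have : ρ ^ 3 < ρ := pow_lt_self_of_lt_one₀ hρ0 hρ1 (by norm_num)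
    rw [sub_mul, inv_mul_cancel₀ hρ0.ne']
    linarith
  have hcont : Continuous fun r : ℝ ↦ (ρ⁻¹ - 1) * r + ρ * r ^ 2 := by fun_prop
  have hnear : ∀ᶠ r in 𝓝[>] ρ, r < 1 ∧ (ρ⁻¹ - 1) * r + ρ * r ^ 2 < 1 :=
    nhdsWithin_le_nhds ((eventually_lt_nhds hρ1).and (hcont.tendsto ρ |>.eventually_lt_const hval))
  obtain ⟨r, ⟨hr1, hr⟩, hρr⟩ := (hnear.and self_mem_nhdsWithin).exists
  have hρr : ρ < r := hρr
  have hr' : 0 < 1 - r := sub_pos.2 hr1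
  have hsum := hasSum_coeff_discrCofactor_mul_pow ρ (abs_lt.2 ⟨by linarith, hr1⟩)
  refine ⟨r, hρr, (ρ⁻¹ - 2) * ((1 - r)⁻¹ * r) + ρ * ((1 - r)⁻¹ * r * r), ?_, ?_⟩
  · calc (ρ⁻¹ - 2) * ((1 - r)⁻¹ * r) + ρ * ((1 - r)⁻¹ * r * r)
        = ((ρ⁻¹ - 2) * r + ρ * r ^ 2) / (1 - r) := by rw [div_eq_inv_mul]; ring
      _ ≤ 1 := by rw [div_le_one hr']; linarith
  · simpa only [Real.norm_of_nonneg (coeff_discrCofactor_nonneg hρ0.le hρ2 _)] using hsum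

theorem tendsto_L_div_L_succ (hρ0 : 0 < ρ) (hroot : ρ ^ 3 + ρ ^ 2 + 3 * ρ - 1 = 0) :
    Tendsto (fun n ↦ (L n : ℝ) / L (n + 1)) atTop (𝓝 ρ) := by
  have hρ2 : 2 ≤ ρ⁻¹ := by
    rw [le_inv_comm₀ two_pos hρ0]
    have := pow_pos hρ0 3
    have := pow_pos hρ0 2
    linarith
  obtain ⟨r, hρr, s, hs, hsum⟩ := exists_hasSum_norm_coeff_discrCofactor_le_one hρ0 hρ2
  have hlim := tendsto_coeff_div_coeff_succ_of_sq_eq hρ0.ne' (by rwa [Real.norm_of_nonneg hρ0.le])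
    constantCoeff_termDiscrSqrt (sq_termDiscrSqrt hρ0.ne' hroot) hsum hs
  rw [← tendsto_add_atTop_iff_nat 1]
  refine ((tendsto_add_atTop_iff_nat 2).2 hlim).congr fun n ↦ ?_
  rw [add_right_comm, coeff_termDiscrSqrt_add_two, coeff_termDiscrSqrt_add_two,
    mul_div_mul_left _ _ (by norm_num)]

end TermSeries

theorem density_neutralHnf (ρ : ℝ)
    (hρ_mem : ρ ∈ Set.Ioo (0 : ℝ) 1)
    (hρ_root : ρ ^ 3 + ρ ^ 2 + 3 * ρ - 1 = 0) :
    Filter.Tendsto (fun n : ℕ => (K n : ℝ) / (L n : ℝ)) Filter.atTop (nhds ρ) := by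
  have hL := tendsto_L_div_L_succ hρ_mem.1 hρ_root
  rw [← tendsto_add_atTop_iff_nat 2]
  refine ((tendsto_add_atTop_iff_nat 1).2 hL).congr fun n ↦ ?_
  rw [K_add_two]
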